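/- Let 𝕏 be a σ-finite measure space and ℳ, 𝒩 Banach L^0(𝕏)-modules. For every α ∈ ℳ ⊗̂_π 𝒩 it holds that |α|_π = ⋀{ Σ_{n∈ℕ} |v_n||w_n| : (v_n)_{n∈ℕ} ⊆ ℳ, (w_n)_{n∈ℕ} ⊆ 𝒩, (v_n ⊗ w_n)_{n∈ℕ} ∈ ℓ₁(ℕ, ℳ ⊗̂_π 𝒩), α = Σ_{n∈ℕ} v_n ⊗ w_n }, where Σ_{n∈ℕ} v_n ⊗ w_n denotes the sum of the summable family {v_n ⊗ w_n}_{n∈ℕ} in ℳ ⊗̂_π 𝒩. -/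

import Mathlib

/-!
The F-norm `∫ min(|f|, 1)` metrizes convergence in measure on `L⁰(𝕏)`. It is additive on
nonnegative functions with sum at most `1`, and this allows one to approximate in F-norm the infimum
of any family that is stable under binary infima. The values `∑ |vᵢ||wᵢ|` of the representations of
a tensor `α` form such a family, because two representations can be glued along a measurable set, so
`|α|_π` is almost attained by a single representation.

Given `p` in the completion, write it as a rapidly convergent telescoping series of algebraic
tensors, choose almost optimal representations of the terms, and concatenate them. The resulting
series of elementary tensors sums to `p`, and its value exceeds `|p|_π` by an arbitrarily small
amount. Conversely no series does better than `|p|_π`, by the triangle inequality.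
-/

open MeasureTheory Filter Set TensorProduct

noncomputable section

namespace Paper

variable {X : Type*} [MeasurableSpace X]

/-- The space `L⁰(𝕏)` of real-valued measurable functions up to `μ`-a.e. equality. -/
abbrev L0 (μ : Measure X) : Type _ := X →ₘ[μ] ℝ

instance (μ : Measure X) : CommRing (L0 μ) :=
  { (inferInstance : AddCommGroup (L0 μ)), (inferInstance : CommMonoid (L0 μ)) with
    left_distrib := fun a b c => AEEqFun.toGerm_injective <| by
      simp only [AEEqFun.mul_toGerm, AEEqFun.add_toGerm, mul_add]
    right_distrib := fun a b c => AEEqFun.toGerm_injective <| by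
      simp only [AEEqFun.mul_toGerm, AEEqFun.add_toGerm, add_mul]
    zero_mul := fun a => AEEqFun.toGerm_injective <| by
      simp only [AEEqFun.mul_toGerm, AEEqFun.zero_toGerm, zero_mul]
    mul_zero := fun a => AEEqFun.toGerm_injective <| by
      simp only [AEEqFun.mul_toGerm, AEEqFun.zero_toGerm, mul_zero] }

/-- The distance on `L⁰(𝕏)` inducing the topology of convergence in measure, defined through
the auxiliary finite measure `μ.toFinite` (which satisfies `μ ≪ μ.toFinite ≪ μ`). -/
noncomputable def dL0 (μ : Measure X) [SFinite μ] (f g : L0 μ) : ℝ :=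
  ∫ x, min |f x - g x| 1 ∂(μ.toFinite)

/-- A Banach `L⁰(𝕏)`-module: a module over `L⁰(𝕏)` endowed with a pointwise norm, complete
with respect to the induced distance. -/
class BanachMod (μ : Measure X) [SFinite μ] (M : Type*) [AddCommGroup M]
    [Module (L0 μ) M] where
  pn : M → L0 μ
  pn_nonneg : ∀ v : M, 0 ≤ pn v
  pn_eq_zero : ∀ v : M, pn v = 0 ↔ v = 0
  pn_add_le : ∀ v w : M, pn (v + w) ≤ pn v + pn w
  pn_smul : ∀ (f : L0 μ) (v : M), pn (f • v) = |f| * pn v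
  complete : ∀ u : ℕ → M,
    (∀ ε : ℝ, 0 < ε → ∃ N : ℕ, ∀ m ≥ N, ∀ n ≥ N, dL0 μ (pn (u m - u n)) 0 < ε) →
    ∃ v : M, Tendsto (fun n => dL0 μ (pn (u n - v)) 0) atTop (nhds 0)

/-- The pointwise norm of a Banach `L⁰(𝕏)`-module, with the measure explicit. -/
noncomputable def pn (μ : Measure X) [SFinite μ] {M : Type*} [AddCommGroup M]
    [Module (L0 μ) M] [BanachMod μ M] (v : M) : L0 μ :=
  BanachMod.pn v

/-- The distance on a Banach `L⁰(𝕏)`-module. -/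
noncomputable def dM (μ : Measure X) [SFinite μ] {M : Type*} [AddCommGroup M]
    [Module (L0 μ) M] [BanachMod μ M] (v w : M) : ℝ :=
  dL0 μ (pn μ (v - w)) 0

section Defs

variable (μ : Measure X) [SFinite μ]
variable {M N : Type*} [AddCommGroup M] [Module (L0 μ) M] [BanachMod μ M]
  [AddCommGroup N] [Module (L0 μ) N] [BanachMod μ N]

/-- The set of admissible bounds of a map between Banach `L⁰(𝕏)`-modules; the pointwise norm
`|T|` of a homomorphism is the infimum of this set. -/
def homBddSet (T : M → N) : Set (L0 μ) :=
  {g | 0 ≤ g ∧ ∀ v, pn μ (T v) ≤ g * pn μ v}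

/-- A homomorphism of Banach `L⁰(𝕏)`-modules: an `L⁰(𝕏)`-linear map admitting a bound
`g ∈ L⁰(𝕏)⁺` with `|T v| ≤ g |v|` (equivalently, `L⁰(𝕏)`-linear and continuous). -/
def IsHom (T : M →ₗ[L0 μ] N) : Prop :=
  ∃ g, g ∈ homBddSet μ (⇑T)

/-- The set of admissible bounds of an `L⁰(𝕏)`-valued map (for elements of the dual module). -/
def dualBddSet (ω : M → L0 μ) : Set (L0 μ) :=
  {g | 0 ≤ g ∧ ∀ v, |ω v| ≤ g * pn μ v}

/-- Membership in the dual module `ℳ*`: an `L⁰(𝕏)`-linear map `ω : ℳ → L⁰(𝕏)` admitting a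
bound `g ∈ L⁰(𝕏)⁺` with `|ω v| ≤ g |v|`. -/
def IsDual (ω : M →ₗ[L0 μ] L0 μ) : Prop :=
  ∃ g, g ∈ dualBddSet μ (⇑ω)

/-- Membership in the unit disc `𝔻_{ℳ*}` of the dual module: `|ω| ≤ 1`, equivalently
`|ω v| ≤ |v|` for every `v`. -/
def InDualDisc (ω : M →ₗ[L0 μ] L0 μ) : Prop :=
  ∀ v, |ω v| ≤ pn μ v

/-- The family of pointwise norms `|s - ∑_{i ∈ F ∪ G} v i|` for `G` finite disjoint from `F`,
whose `F`-indexed inf-sup being `0` defines `s = ∑_{i∈I} v i`. -/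
def sumUB {I : Type*} (v : I → M) (s : M) (F : Finset I) : Set (L0 μ) :=
  {g | ∃ G : Finset I, Disjoint G F ∧ g = pn μ (s - (∑ i ∈ F, v i + ∑ i ∈ G, v i))}

/-- `HasSumMod μ v s` means that the family `{v_i}` is summable in the Banach `L⁰(𝕏)`-module
with sum `s`, i.e. `⋀_F ⋁_G |s - ∑_{i ∈ F ∪ G} v_i| = 0` (the inner suprema being the values
of `b`, and the outer infimum being `0`). -/
def HasSumMod {I : Type*} (v : I → M) (s : M) : Prop :=
  ∃ b : Finset I → L0 μ, (∀ F, IsLUB (sumUB μ v s F) (b F)) ∧ IsGLB (Set.range b) 0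

/-- A family in a Banach `L⁰(𝕏)`-module is summable if it has a sum. -/
def SummableMod {I : Type*} (v : I → M) : Prop :=
  ∃ s, HasSumMod μ v s

/-- The partial sums `∑_{i ∈ F} |v i|` of the pointwise norms of a family; the element `|v|₁`
of `ℓ₁(I, ℳ)` is the supremum of this set. -/
def l1PartialSums {I : Type*} (v : I → M) : Set (L0 μ) :=
  {g | ∃ F : Finset I, g = ∑ i ∈ F, pn μ (v i)}

/-- Membership in `ℓ₁(I, ℳ)`: the partial sums of the pointwise norms admit a supremum
(equivalently, an upper bound) in `L⁰(𝕏)`. -/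
def Meml1 {I : Type*} (v : I → M) : Prop :=
  ∃ b, IsLUB (l1PartialSums μ v) b

/-- The partial sums `∑_{i ∈ F} |v i|` for an `L⁰(𝕏)`-valued family. -/
def l1PartialSumsF {I : Type*} (v : I → L0 μ) : Set (L0 μ) :=
  {g | ∃ F : Finset I, g = ∑ i ∈ F, |v i|}

/-- Membership in `ℓ₁(I, L⁰(𝕏))`. -/
def Meml1F {I : Type*} (v : I → L0 μ) : Prop :=
  ∃ b, IsLUB (l1PartialSumsF μ v) b

/-- The set whose infimum defines the projective pointwise norm: all values
`∑_{i=1}^n |v_i||w_i|` over representations `α = ∑_{i=1}^n v_i ⊗ w_i`. -/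
def piReps (α : M ⊗[L0 μ] N) : Set (L0 μ) :=
  {g | ∃ (n : ℕ) (v : Fin n → M) (w : Fin n → N),
    α = ∑ i, v i ⊗ₜ[L0 μ] w i ∧ g = ∑ i, pn μ (v i) * pn μ (w i)}

/-- The set whose supremum defines the injective pointwise norm: all values
`|∑_{i=1}^n ω(v_i) η(w_i)|` over representations `α = ∑_{i=1}^n v_i ⊗ w_i` and elements
`ω ∈ 𝔻_{ℳ*}`, `η ∈ 𝔻_{𝒩*}`. -/
def epsReps (α : M ⊗[L0 μ] N) : Set (L0 μ) :=
  {g | ∃ (n : ℕ) (v : Fin n → M) (w : Fin n → N)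
    (ω : M →ₗ[L0 μ] L0 μ) (η : N →ₗ[L0 μ] L0 μ), InDualDisc μ ω ∧ InDualDisc μ η ∧
    α = ∑ i, v i ⊗ₜ[L0 μ] w i ∧ g = |∑ i, ω (v i) * η (w i)|}

/-- `IsPiTensor μ M N P e` states that the Banach `L⁰(𝕏)`-module `P`, together with the
`L⁰(𝕏)`-linear map `e` defined on the algebraic tensor product, realizes the projective
tensor product `ℳ ⊗̂_π 𝒩`: the pointwise norm of `e α` is the projective pointwise norm
`|α|_π` and the image of `e` is dense. -/
structure IsPiTensor (M N P : Type*) [AddCommGroup M] [Module (L0 μ) M] [BanachMod μ M]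
    [AddCommGroup N] [Module (L0 μ) N] [BanachMod μ N]
    [AddCommGroup P] [Module (L0 μ) P] [BanachMod μ P]
    (e : M ⊗[L0 μ] N →ₗ[L0 μ] P) : Prop where
  pn_emb : ∀ α : M ⊗[L0 μ] N, IsGLB (piReps μ α) (pn μ (e α))
  dense : ∀ p : P, ∀ ε : ℝ, 0 < ε → ∃ α : M ⊗[L0 μ] N, dM μ (e α) p < ε

/-- `IsEpsTensor μ M N P e` states that the Banach `L⁰(𝕏)`-module `P`, together with the
`L⁰(𝕏)`-linear map `e` defined on the algebraic tensor product, realizes the injective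
tensor product `ℳ ⊗̂_ε 𝒩`: the pointwise norm of `e α` is the injective pointwise norm
`|α|_ε` and the image of `e` is dense. -/
structure IsEpsTensor (M N P : Type*) [AddCommGroup M] [Module (L0 μ) M] [BanachMod μ M]
    [AddCommGroup N] [Module (L0 μ) N] [BanachMod μ N]
    [AddCommGroup P] [Module (L0 μ) P] [BanachMod μ P]
    (e : M ⊗[L0 μ] N →ₗ[L0 μ] P) : Prop where
  pn_emb : ∀ α : M ⊗[L0 μ] N, IsLUB (epsReps μ α) (pn μ (e α))
  dense : ∀ p : P, ∀ ε : ℝ, 0 < ε → ∃ α : M ⊗[L0 μ] N, dM μ (e α) p < ε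

end Defs

open scoped Topology ENNReal

section L0

variable {μ : Measure X} {ι : Type*}

instance : IsOrderedAddMonoid (L0 μ) where
  add_le_add_left f g hfg k := by
    rw [← AEEqFun.coeFn_le] at hfg ⊢
    filter_upwards [hfg, AEEqFun.coeFn_add f k, AEEqFun.coeFn_add g k] with x hx hfk hgk
    rw [hfk, hgk]
    exact add_le_add_left hx (k x)

instance : ZeroLEOneClass (L0 μ) where
  zero_le_one := (AEEqFun.mk_le_mk _ _).2 (Eventually.of_forall fun _ => zero_le_one)

lemma ae_nonneg {f : L0 μ} (hf : 0 ≤ f) : ∀ᵐ x ∂μ, 0 ≤ f x := by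
  filter_upwards [AEEqFun.coeFn_le.2 hf, AEEqFun.coeFn_zero (μ := μ) (β := ℝ)] with x hx h0
  simpa only [h0, Pi.zero_apply] using hx

lemma nonneg_of_ae {f : L0 μ} (hf : ∀ᵐ x ∂μ, 0 ≤ f x) : 0 ≤ f := by
  rw [← AEEqFun.coeFn_le]
  filter_upwards [hf, AEEqFun.coeFn_zero (μ := μ) (β := ℝ)] with x hx h0
  simpa only [h0, Pi.zero_apply] using hx

instance : IsOrderedRing (L0 μ) := .of_mul_nonneg fun f g hf hg => nonneg_of_ae <| by
  filter_upwards [ae_nonneg hf, ae_nonneg hg, AEEqFun.coeFn_mul f g] with x hfx hgx hx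
  simpa only [hx, Pi.mul_apply] using mul_nonneg hfx hgx

lemma isLUB_range_of_ae [Countable ι] {f : ι → L0 μ} {g : L0 μ}
    (h : ∀ᵐ x ∂μ, IsLUB (range fun i => f i x) (g x)) : IsLUB (range f) g := by
  constructor
  · rintro _ ⟨i, rfl⟩
    rw [← AEEqFun.coeFn_le]
    filter_upwards [h] with x hx using hx.1 ⟨i, rfl⟩
  · intro u hu
    have hu' : ∀ᵐ x ∂μ, ∀ i, f i x ≤ u x :=
      ae_all_iff.2 fun i => AEEqFun.coeFn_le.2 (hu ⟨i, rfl⟩)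
    rw [← AEEqFun.coeFn_le]
    filter_upwards [h, hu'] with x hx hux using hx.2 (forall_mem_range.2 hux)

lemma exists_isLUB_of_countable {S : Set (L0 μ)} (hS : S.Countable) (hne : S.Nonempty)
    (hbdd : BddAbove S) : ∃ g, IsLUB S g := by
  obtain ⟨f, rfl⟩ := hS.exists_eq_range hne
  obtain ⟨b, hb⟩ := hbdd
  have hmeas : AEStronglyMeasurable (fun x => ⨆ n, f n x) μ :=
    (Measurable.iSup fun n => (f n).measurable).aestronglyMeasurable
  have hbdd' : ∀ᵐ x ∂μ, ∀ n, f n x ≤ b x :=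
    ae_all_iff.2 fun n => AEEqFun.coeFn_le.2 (hb ⟨n, rfl⟩)
  refine ⟨AEEqFun.mk _ hmeas, isLUB_range_of_ae ?_⟩
  filter_upwards [hbdd', AEEqFun.coeFn_mk _ hmeas] with x hbx hx
  rw [hx]
  exact isLUB_ciSup ⟨b x, forall_mem_range.2 hbx⟩

lemma exists_inf_eq_mul_add_mul (f g : L0 μ) :
    ∃ χ : L0 μ, 0 ≤ χ ∧ χ ≤ 1 ∧ f ⊓ g = χ * f + (1 - χ) * g := by
  have hmeas : AEStronglyMeasurable ({x | f x ≤ g x}.indicator (1 : X → ℝ)) μ :=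
    (measurable_one.indicator (measurableSet_le f.measurable g.measurable)).aestronglyMeasurable
  have hχ := AEEqFun.coeFn_mk _ hmeas
  have hone := AEEqFun.coeFn_one (μ := μ) (β := ℝ)
  set χ : L0 μ := AEEqFun.mk _ hmeas
  refine ⟨χ, nonneg_of_ae ?_, AEEqFun.coeFn_le.1 ?_, AEEqFun.ext ?_⟩
  · filter_upwards [hχ] with x hx
    rw [hx]
    exact indicator_nonneg (fun _ _ => zero_le_one) x
  · filter_upwards [hχ, hone] with x hx h1
    rw [hx, h1]
    exact indicator_le_self' (fun _ _ => zero_le_one) x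
  · filter_upwards [hχ, hone, AEEqFun.coeFn_sub 1 χ, AEEqFun.coeFn_inf f g,
      AEEqFun.coeFn_add (χ * f) ((1 - χ) * g), AEEqFun.coeFn_mul χ f,
      AEEqFun.coeFn_mul (1 - χ) g] with x hx h1 hsub hinf hadd hmul hmul'
    simp only [hinf, hadd, Pi.add_apply, hmul, hmul', Pi.mul_apply, hsub, Pi.sub_apply, h1, hx]
    rcases le_or_gt (f x) (g x) with hle | hlt
    · simp [hle]
    · simp [hlt.le, hlt.not_ge]

/-- Almost everywhere convergence of a series of elements of `L⁰(𝕏)`. -/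
def HasSumAE (f : ι → L0 μ) (g : L0 μ) : Prop :=
  ∀ᵐ x ∂μ, HasSum (fun i => f i x) (g x)

lemma exists_hasSumAE [Countable ι] {f : ι → L0 μ} (hf : ∀ᵐ x ∂μ, Summable fun i => f i x) :
    ∃ g, HasSumAE f g := by
  have hmeas : AEStronglyMeasurable (fun x => ∑' i, f i x) μ :=
    (Measurable.tsum fun i => (f i).measurable).aestronglyMeasurable
  refine ⟨AEEqFun.mk _ hmeas, ?_⟩
  filter_upwards [hf, AEEqFun.coeFn_mk _ hmeas] with x hsum hx
  rw [hx]
  exact hsum.hasSum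

namespace HasSumAE

variable {g : L0 μ}

lemma isLUB [Countable ι] {f : ι → L0 μ} (h : HasSumAE f g) (hf : ∀ i, 0 ≤ f i) :
    IsLUB (range fun s : Finset ι => ∑ i ∈ s, f i) g := by
  refine isLUB_range_of_ae ?_
  have hsum : ∀ᵐ x ∂μ, ∀ s : Finset ι, (∑ i ∈ s, f i : L0 μ) x = ∑ i ∈ s, f i x :=
    ae_all_iff.2 fun s => AEEqFun.coeFn_fun_finsetSum s f
  filter_upwards [h, hsum, ae_all_iff.2 fun i => ae_nonneg (hf i)] with x hx hsumx hfx
  simpa only [hsumx] using isLUB_hasSum hfx hx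

lemma sub_sum_range {f : ℕ → L0 μ} (h : HasSumAE f g) (K : ℕ) :
    HasSumAE (fun k => f (k + K)) (g - ∑ k ∈ Finset.range K, f k) := by
  filter_upwards [h, AEEqFun.coeFn_sub g (∑ k ∈ Finset.range K, f k),
    AEEqFun.coeFn_fun_finsetSum (Finset.range K) f] with x hx hsub hsum
  rw [hsub, Pi.sub_apply, hsum]
  exact (hasSum_nat_add_iff' K).2 hx

lemma sigma {κ : ι → Type*} [Countable ι] [∀ i, Fintype (κ i)] {f : (Σ i, κ i) → L0 μ}
    (h : HasSumAE (fun i => ∑ j, f ⟨i, j⟩) g) (hf : ∀ s, 0 ≤ f s) : HasSumAE f g := by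
  have hinner : ∀ᵐ x ∂μ, ∀ i, (∑ j, f ⟨i, j⟩ : L0 μ) x = ∑ j, f ⟨i, j⟩ x :=
    ae_all_iff.2 fun i => AEEqFun.coeFn_fun_finsetSum _ fun j => f ⟨i, j⟩
  have : ∀ i, Countable (κ i) := fun i => Finite.to_countable
  filter_upwards [h, hinner, ae_all_iff.2 fun s => ae_nonneg (hf s)] with x hx hinnerx hfx
  simp only [hinnerx] at hx
  refine hx.sigma_of_hasSum (fun i => hasSum_fintype _) ((summable_sigma_of_nonneg hfx).2 ⟨?_, ?_⟩)
  · exact fun i => (hasSum_fintype _).summable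
  · simpa only [tsum_fintype] using hx.summable

end HasSumAE

end L0

section FNorm

lemma sub_sum_sub_inf_le {G : Type*} [AddCommGroup G] [Lattice G] [IsOrderedAddMonoid G]
    (g : ℕ → G) (k : ℕ) :
    g 0 - ∑ j ∈ Finset.range k, (g j - g j ⊓ g (j + 1)) ≤ g k := by
  induction k with
  | zero => simp only [Finset.range_zero, Finset.sum_empty, sub_zero, le_refl]
  | succ k ih =>
    rw [Finset.sum_range_succ, ← sub_sub]
    exact ((sub_le_sub_right ih _).trans_eq (sub_sub_cancel _ _)).trans inf_le_right

lemma min_tsum_one_le {ι : Type*} (a : ι → ℝ≥0∞) :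
    min (∑' i, a i) 1 ≤ ∑' i, min (a i) 1 := by
  by_cases h : ∀ i, a i ≤ 1
  · simp only [min_eq_left (h _), min_le_left]
  · push Not at h
    obtain ⟨i, hi⟩ := h
    calc min (∑' i, a i) 1 ≤ min (a i) 1 := by rw [min_eq_right hi.le]; exact min_le_right _ _
      _ ≤ ∑' i, min (a i) 1 := ENNReal.le_tsum (f := fun i => min (a i) 1) i

lemma summable_norm_of_tsum_min_enorm_ne_top {ι E : Type*} [SeminormedAddCommGroup E] {a : ι → E}
    (h : ∑' i, min ‖a i‖ₑ 1 ≠ ∞) : Summable fun i => ‖a i‖ := by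
  have hmin : Summable fun i => min ‖a i‖ 1 := by
    convert ENNReal.summable_toReal h using 2 with i
    rw [ENNReal.toReal_min enorm_ne_top ENNReal.one_ne_top, toReal_enorm, ENNReal.toReal_one]
  have hlt : ∀ᶠ i in cofinite, min ‖a i‖ 1 < 1 :=
    hmin.tendsto_cofinite_zero.eventually_lt_const one_pos
  refine hmin.congr_cofinite (hlt.mono fun i hi => min_eq_left ?_)
  exact (min_lt_iff.1 hi).elim le_of_lt fun h => absurd h (lt_irrefl 1)

variable {μ : Measure X} {ι : Type*}

lemma measurable_min_enorm_one (f : L0 μ) : Measurable fun x => min ‖f x‖ₑ 1 :=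
  f.measurable.enorm.min measurable_const

variable [SFinite μ]

/-- The F-norm `∫ min(|f|, 1)` of `L⁰(𝕏)` with respect to the finite measure `μ.toFinite`. It is the
distance `dL0 μ f 0`, made `ℝ≥0∞`-valued so that infinite sums of F-norms need no side
conditions. -/
def fnorm (f : L0 μ) : ℝ≥0∞ := ∫⁻ x, min ‖f x‖ₑ 1 ∂μ.toFinite

lemma fnorm_ne_top (f : L0 μ) : fnorm f ≠ ∞ := by
  refine ne_top_of_le_ne_top (measure_ne_top μ.toFinite univ) ?_
  calc fnorm f ≤ ∫⁻ _, 1 ∂μ.toFinite := lintegral_mono fun _ => min_le_right _ _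
    _ = μ.toFinite univ := lintegral_one

lemma fnorm_eq_ofReal_dL0 (f : L0 μ) : fnorm f = ENNReal.ofReal (dL0 μ f 0) := by
  have hnonneg (x : X) : 0 ≤ min |f x - (0 : L0 μ) x| 1 := le_min (abs_nonneg _) zero_le_one
  have hmeas : Measurable fun x => min |f x - (0 : L0 μ) x| 1 :=
    (f.measurable.sub (0 : L0 μ).measurable).abs.min measurable_const
  have hint : Integrable (fun x => min |f x - (0 : L0 μ) x| 1) μ.toFinite :=
    .of_bound hmeas.aestronglyMeasurable 1 <| Eventually.of_forall fun x => by
      rw [Real.norm_of_nonneg (hnonneg x)]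
      exact min_le_right _ _
  rw [dL0, ofReal_integral_eq_lintegral_ofReal hint (Eventually.of_forall hnonneg), fnorm]
  refine lintegral_congr_ae ?_
  rw [EventuallyEq, ae_toFinite]
  filter_upwards [AEEqFun.coeFn_zero (μ := μ) (β := ℝ)] with x hx
  rw [hx, Pi.zero_apply, sub_zero, ENNReal.ofReal_min, ENNReal.ofReal_one,
    Real.enorm_eq_ofReal_abs]

lemma fnorm_mono {f g : L0 μ} (h : |f| ≤ |g|) : fnorm f ≤ fnorm g := by
  refine lintegral_mono_ae ?_
  rw [ae_toFinite]
  filter_upwards [AEEqFun.coeFn_le.2 h, AEEqFun.coeFn_abs f, AEEqFun.coeFn_abs g] with x hx hf hg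
  rw [hf, hg] at hx
  exact min_le_min_right _ (enorm_le_iff_norm_le.2 hx)

lemma fnorm_mono_of_nonneg {f g : L0 μ} (hf : 0 ≤ f) (h : f ≤ g) : fnorm f ≤ fnorm g :=
  fnorm_mono (by rwa [abs_of_nonneg hf, abs_of_nonneg (hf.trans h)])

lemma fnorm_eq_zero {f : L0 μ} : fnorm f = 0 ↔ f = 0 := by
  have hmin (a : ℝ) : min ‖a‖ₑ 1 = 0 ↔ a = 0 := by
    rw [← nonpos_iff_eq_zero, min_le_iff]
    simp
  rw [fnorm, lintegral_eq_zero_iff (measurable_min_enorm_one f), EventuallyEq, ae_toFinite,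
    AEEqFun.ext_iff]
  refine eventually_congr ?_
  filter_upwards [AEEqFun.coeFn_zero (μ := μ) (β := ℝ)] with x hx
  rw [hx, Pi.zero_apply, Pi.zero_apply, hmin]

lemma fnorm_add_le (f g : L0 μ) : fnorm (f + g) ≤ fnorm f + fnorm g := by
  rw [fnorm, fnorm, fnorm, ← lintegral_add_left (measurable_min_enorm_one f)]
  refine lintegral_mono_ae ?_
  rw [ae_toFinite]
  filter_upwards [AEEqFun.coeFn_add f g] with x hx
  calc min ‖(f + g) x‖ₑ 1 ≤ min (‖f x‖ₑ + ‖g x‖ₑ) 1 := by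
        rw [hx]; exact min_le_min_right _ (enorm_add_le _ _)
    _ ≤ min ‖f x‖ₑ 1 + min ‖g x‖ₑ 1 := (min_add_distrib' _ _ _).trans_le (min_le_left _ _)

lemma fnorm_add_of_add_le_one {f g : L0 μ} (hf : 0 ≤ f) (hg : 0 ≤ g) (hfg : f + g ≤ 1) :
    fnorm (f + g) = fnorm f + fnorm g := by
  rw [fnorm, fnorm, fnorm, ← lintegral_add_left (measurable_min_enorm_one f)]
  refine lintegral_congr_ae ?_
  rw [EventuallyEq, ae_toFinite]
  filter_upwards [ae_nonneg hf, ae_nonneg hg, AEEqFun.coeFn_le.2 hfg, AEEqFun.coeFn_add f g,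
    AEEqFun.coeFn_one (μ := μ) (β := ℝ)] with x hfx hgx hle hadd hone
  rw [hadd, hone] at hle
  simp only [Pi.add_apply, Pi.one_apply] at hle
  have hle' : ENNReal.ofReal (f x) + ENNReal.ofReal (g x) ≤ 1 := by
    rw [← ENNReal.ofReal_add hfx hgx]
    exact ENNReal.ofReal_le_one.2 hle
  rw [hadd, Pi.add_apply, Real.enorm_eq_ofReal (add_nonneg hfx hgx), Real.enorm_eq_ofReal hfx,
    Real.enorm_eq_ofReal hgx, ENNReal.ofReal_add hfx hgx, min_eq_left hle',
    min_eq_left (le_self_add.trans hle'), min_eq_left (le_add_self.trans hle')]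

lemma HasSumAE.fnorm_le [Countable ι] {f : ι → L0 μ} {g : L0 μ} (h : HasSumAE f g) :
    fnorm g ≤ ∑' i, fnorm (f i) := by
  simp only [fnorm]
  rw [← lintegral_tsum fun i => (measurable_min_enorm_one (f i)).aemeasurable]
  refine lintegral_mono_ae ?_
  rw [ae_toFinite]
  filter_upwards [h] with x hx
  calc min ‖g x‖ₑ 1 ≤ min (∑' i, ‖f i x‖ₑ) 1 := by
        rw [← hx.tsum_eq]; exact min_le_min_right _ enorm_tsum_le_tsum_enorm
    _ ≤ ∑' i, min ‖f i x‖ₑ 1 := min_tsum_one_le _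

lemma exists_hasSumAE_of_tsum_fnorm_ne_top [Countable ι] {f : ι → L0 μ}
    (h : ∑' i, fnorm (f i) ≠ ∞) : ∃ g, HasSumAE f g := by
  refine exists_hasSumAE ?_
  simp only [fnorm] at h
  rw [← lintegral_tsum fun i => (measurable_min_enorm_one (f i)).aemeasurable] at h
  have hfin := ae_lt_top (Measurable.tsum fun i => measurable_min_enorm_one (f i)) h
  rw [ae_toFinite] at hfin
  filter_upwards [hfin] with x hx
  exact (summable_norm_of_tsum_min_enorm_ne_top hx.ne).of_norm

lemma nonpos_of_forall_exists_fnorm_le {c : L0 μ}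
    (h : ∀ ε : ℝ≥0∞, 0 < ε → ∃ f, c ≤ f ∧ fnorm f ≤ ε) : c ≤ 0 := by
  have hpos : fnorm (c ⊔ 0) = 0 := by
    refine nonpos_iff_eq_zero.1 (le_of_forall_gt_imp_ge_of_dense fun ε hε => ?_)
    obtain ⟨f, hcf, hf⟩ := h ε hε
    refine (fnorm_mono ?_).trans hf
    rw [abs_of_nonneg le_sup_right]
    exact sup_le (hcf.trans (le_abs_self f)) (abs_nonneg f)
  exact le_sup_left.trans (fnorm_eq_zero.1 hpos).le

lemma isGLB_of_forall_exists_fnorm_sub_le {S : Set (L0 μ)} {c : L0 μ} (hc : c ∈ lowerBounds S)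
    (h : ∀ ε : ℝ≥0∞, 0 < ε → ∃ g ∈ S, fnorm (g - c) ≤ ε) : IsGLB S c := by
  refine ⟨hc, fun d hd => sub_nonpos.1 (nonpos_of_forall_exists_fnorm_le fun ε hε => ?_)⟩
  obtain ⟨g, hgS, hg⟩ := h ε hε
  exact ⟨g - c, sub_le_sub_right (hd hgS) c, hg⟩

lemma tsum_fnorm_ne_top_of_succ {g : ℕ → L0 μ} (h : ∑' k, fnorm (g (k + 1)) ≠ ∞) :
    ∑' k, fnorm (g k) ≠ ∞ := by
  rw [tsum_eq_zero_add' ENNReal.summable]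
  exact ENNReal.add_ne_top.2 ⟨fnorm_ne_top _, h⟩

lemma HasSumAE.fnorm_sub_le {g : ℕ → L0 μ} {G : L0 μ} (h : HasSumAE g G) (c : L0 μ) :
    fnorm (G - c) ≤ fnorm (g 0 - c) + ∑' k, fnorm (g (k + 1)) := by
  have htail : fnorm (G - g 0) ≤ ∑' k, fnorm (g (k + 1)) := by
    simpa only [Finset.sum_range_one] using (h.sub_sum_range 1).fnorm_le
  calc fnorm (G - c) = fnorm ((g 0 - c) + (G - g 0)) := by rw [add_comm, sub_add_sub_cancel]
    _ ≤ fnorm (g 0 - c) + ∑' k, fnorm (g (k + 1)) :=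
        (fnorm_add_le _ _).trans (add_le_add le_rfl htail)

lemma fnorm_sub_add_tsum_le (f g : ℕ → L0 μ) (c : L0 μ) :
    fnorm (g 0 - c) + ∑' k, fnorm (g (k + 1)) ≤
      ∑' k, fnorm (g k - f k) + (fnorm (f 0 - c) + ∑' k, fnorm (f (k + 1))) := by
  have hle (a b d : L0 μ) : fnorm (a - d) ≤ fnorm (a - b) + fnorm (b - d) := by
    simpa only [sub_add_sub_cancel] using fnorm_add_le (a - b) (b - d)
  calc fnorm (g 0 - c) + ∑' k, fnorm (g (k + 1))
      ≤ (fnorm (g 0 - f 0) + fnorm (f 0 - c)) +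
          ∑' k, (fnorm (g (k + 1) - f (k + 1)) + fnorm (f (k + 1))) := by
        gcongr with k
        · exact hle _ _ _
        · simpa only [sub_zero] using hle (g (k + 1)) (f (k + 1)) 0
    _ = ∑' k, fnorm (g k - f k) + (fnorm (f 0 - c) + ∑' k, fnorm (f (k + 1))) := by
        rw [ENNReal.tsum_add, tsum_eq_zero_add' (f := fun k => fnorm (g k - f k))
          ENNReal.summable]
        ring

lemma exists_forall_fnorm_sub_inf_le {T : Set (L0 μ)} (hT : InfClosed T) (hne : T.Nonempty)
    (h0 : ∀ f ∈ T, 0 ≤ f) (h1 : ∀ f ∈ T, f ≤ 1) {ε : ℝ≥0∞} (hε : 0 < ε) :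
    ∃ g ∈ T, ∀ f ∈ T, fnorm (g - g ⊓ f) ≤ ε := by
  obtain ⟨f₀, hf₀⟩ := hne
  have hfin : ⨅ f ∈ T, fnorm f ≠ ∞ := ne_top_of_le_ne_top (fnorm_ne_top f₀) (iInf₂_le f₀ hf₀)
  obtain ⟨g, hgT, hg⟩ : ∃ g ∈ T, fnorm g < (⨅ f ∈ T, fnorm f) + ε := by
    simpa only [iInf_lt_iff, exists_prop] using ENNReal.lt_add_right hfin hε.ne'
  refine ⟨g, hgT, fun f hf => ENNReal.le_of_add_le_add_right (fnorm_ne_top (g ⊓ f)) ?_⟩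
  have hinf := hT hgT hf
  calc fnorm (g - g ⊓ f) + fnorm (g ⊓ f) = fnorm g := by
        rw [← fnorm_add_of_add_le_one (sub_nonneg.2 inf_le_left) (h0 _ hinf)
          (by simpa only [sub_add_cancel] using h1 g hgT), sub_add_cancel]
    _ ≤ (⨅ f ∈ T, fnorm f) + ε := hg.le
    _ ≤ ε + fnorm (g ⊓ f) := by
        rw [add_comm]
        gcongr
        exact iInf₂_le _ hinf

lemma exists_fnorm_le_of_isGLB_zero {T : Set (L0 μ)} (hT : InfClosed T) (hne : T.Nonempty)
    (h1 : ∀ f ∈ T, f ≤ 1) (hglb : IsGLB T 0) {ε : ℝ≥0∞} (hε : 0 < ε) :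
    ∃ f ∈ T, fnorm f ≤ ε := by
  obtain ⟨δ, hδ0, hδ⟩ := ENNReal.exists_pos_sum_of_countable' hε.ne' ℕ
  -- The almost minimizers `g k` decrease by at most `D` in total, so `g 0 - D` bounds `T` below.
  choose g hgT hg using fun k =>
    exists_forall_fnorm_sub_inf_le hT hne (fun f hf => hglb.1 hf) h1 (hδ0 k)
  let d (k : ℕ) : L0 μ := g k - g k ⊓ g (k + 1)
  have hd_nonneg (k : ℕ) : 0 ≤ d k := sub_nonneg.2 inf_le_left
  have hd_sum : ∑' k, fnorm (d k) < ε :=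
    (ENNReal.tsum_le_tsum fun k => hg k _ (hgT (k + 1))).trans_lt hδ
  obtain ⟨D, hD⟩ := exists_hasSumAE_of_tsum_fnorm_ne_top hd_sum.ne_top
  have hgD (k : ℕ) : g 0 - D ≤ g k :=
    (sub_le_sub_left ((hD.isLUB hd_nonneg).1 ⟨Finset.range k, rfl⟩) _).trans
      (sub_sum_sub_inf_le g k)
  have hlower : g 0 - D ∈ lowerBounds T := fun f hf => by
    refine sub_nonpos.1 (nonpos_of_forall_exists_fnorm_le fun η hη => ?_)
    have hδ_lim : Tendsto δ atTop (𝓝 0) := ENNReal.tendsto_atTop_zero_of_tsum_ne_top hδ.ne_top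
    obtain ⟨k, hk⟩ := (hδ_lim.eventually_lt_const hη).exists
    refine ⟨g k - g k ⊓ f, ?_, (hg k f hf).trans hk.le⟩
    exact (sub_le_sub_right (hgD k) f).trans (sub_le_sub_left inf_le_right _)
  refine ⟨g 0, hgT 0, ?_⟩
  calc fnorm (g 0) ≤ fnorm D := fnorm_mono_of_nonneg (hglb.1 (hgT 0)) (sub_nonpos.1 (hglb.2 hlower))
    _ ≤ ∑' k, fnorm (d k) := hD.fnorm_le
    _ ≤ ε := hd_sum.le

lemma fnorm_inf_one {f : L0 μ} (hf : 0 ≤ f) : fnorm (f ⊓ 1) = fnorm f := by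
  refine lintegral_congr_ae ?_
  rw [EventuallyEq, ae_toFinite]
  filter_upwards [ae_nonneg hf, AEEqFun.coeFn_inf f 1, AEEqFun.coeFn_one (μ := μ) (β := ℝ)]
    with x hfx hinf hone
  rw [hinf, hone, Pi.one_apply, Real.enorm_eq_ofReal (le_min hfx zero_le_one), ENNReal.ofReal_min,
    ENNReal.ofReal_one, Real.enorm_eq_ofReal hfx, min_assoc, min_self]

lemma exists_fnorm_sub_le_of_isGLB {S : Set (L0 μ)} {c : L0 μ} (hS : InfClosed S)
    (hne : S.Nonempty) (hglb : IsGLB S c) {ε : ℝ≥0∞} (hε : 0 < ε) :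
    ∃ g ∈ S, fnorm (g - c) ≤ ε := by
  have hinf : InfClosed ((fun g => (g - c) ⊓ 1) '' S) := by
    rintro _ ⟨f, hf, rfl⟩ _ ⟨g, hg, rfl⟩
    exact ⟨f ⊓ g, hS hf hg, by dsimp only; rw [inf_sub, inf_inf_distrib_right]⟩
  have hglb' : IsGLB ((fun g => (g - c) ⊓ 1) '' S) 0 := by
    refine ⟨?_, fun d hd => ?_⟩
    · rintro _ ⟨g, hg, rfl⟩
      exact le_inf (sub_nonneg.2 (hglb.1 hg)) zero_le_one
    · have hdc : d + c ∈ lowerBounds S := fun g hg =>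
        le_sub_iff_add_le.1 ((hd ⟨g, hg, rfl⟩).trans inf_le_left)
      exact add_le_iff_nonpos_left.1 (hglb.2 hdc)
  obtain ⟨_, ⟨g, hg, rfl⟩, hgε⟩ := exists_fnorm_le_of_isGLB_zero hinf (hne.image _)
    (by rintro _ ⟨g, -, rfl⟩; exact inf_le_right) hglb' hε
  exact ⟨g, hg, (fnorm_inf_one (sub_nonneg.2 (hglb.1 hg))).symm.trans_le hgε⟩

end FNorm

section BanachMod

variable {μ : Measure X} [SFinite μ] {M : Type*} [AddCommGroup M] [Module (L0 μ) M] [BanachMod μ M]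
  {ι : Type*}

lemma pn_nonneg (v : M) : 0 ≤ pn μ v := BanachMod.pn_nonneg v

lemma pn_add_le (v w : M) : pn μ (v + w) ≤ pn μ v + pn μ w := BanachMod.pn_add_le v w

lemma pn_smul (f : L0 μ) (v : M) : pn μ (f • v) = |f| * pn μ v := BanachMod.pn_smul f v

lemma pn_zero : pn μ (0 : M) = 0 := (BanachMod.pn_eq_zero (0 : M)).2 rfl

lemma pn_neg (v : M) : pn μ (-v) = pn μ v := by
  rw [← neg_one_smul (L0 μ) v, pn_smul, abs_neg, abs_of_nonneg zero_le_one, one_mul]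

lemma pn_sub_comm (v w : M) : pn μ (v - w) = pn μ (w - v) := by
  rw [← neg_sub, pn_neg]

lemma pn_sub_le (v w : M) : pn μ (v - w) ≤ pn μ v + pn μ w := by
  simpa only [sub_eq_add_neg, pn_neg] using pn_add_le (μ := μ) v (-w)

lemma pn_sum_le (s : Finset ι) (v : ι → M) : pn μ (∑ i ∈ s, v i) ≤ ∑ i ∈ s, pn μ (v i) :=
  Finset.le_sum_of_subadditive (pn μ) pn_zero.le pn_add_le s v

lemma pn_sub_pn_le (v w : M) : pn μ v - pn μ w ≤ pn μ (v - w) := by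
  simpa only [sub_le_iff_le_add, sub_add_cancel] using pn_add_le (v - w) w

lemma abs_pn_sub_pn_le (v w : M) : |pn μ v - pn μ w| ≤ pn μ (v - w) :=
  abs_le'.2 ⟨pn_sub_pn_le v w, by rw [neg_sub, pn_sub_comm]; exact pn_sub_pn_le w v⟩

lemma exists_telescoping_approx {A F : Type*} [AddCommGroup A] [FunLike F A M]
    [AddMonoidHomClass F A M] (e : F)
    (he : ∀ u : M, ∀ ε : ℝ≥0∞, 0 < ε → ∃ α, fnorm (pn μ (e α - u)) ≤ ε) (u : M) {ε : ℝ≥0∞}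
    (hε : 0 < ε) :
    ∃ β : ℕ → A,
      Tendsto (fun n => fnorm (pn μ (u - ∑ k ∈ Finset.range n, e (β k)))) atTop (𝓝 0) ∧
      fnorm (pn μ (e (β 0)) - pn μ u) + ∑' k, fnorm (pn μ (e (β (k + 1)))) < ε := by
  obtain ⟨δ, hδ0, hδ⟩ := ENNReal.exists_pos_sum_of_countable' (ENNReal.half_pos hε.ne').ne' ℕ
  choose α hα using fun k => he u (δ k) (hδ0 k)
  have hstep (k : ℕ) : fnorm (pn μ (e (α (k + 1) - α k))) ≤ δ (k + 1) + δ k := by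
    calc fnorm (pn μ (e (α (k + 1) - α k)))
        ≤ fnorm (pn μ (e (α (k + 1)) - u) + pn μ (e (α k) - u)) := by
          rw [map_sub, ← sub_sub_sub_cancel_right _ _ u]
          exact fnorm_mono_of_nonneg (pn_nonneg _) (pn_sub_le _ _)
      _ ≤ δ (k + 1) + δ k := (fnorm_add_le _ _).trans (add_le_add (hα _) (hα _))
  let β : ℕ → A
    | 0 => α 0
    | k + 1 => α (k + 1) - α k
  have hsum (n : ℕ) : ∑ k ∈ Finset.range (n + 1), e (β k) = e (α n) := by
    rw [← map_sum, Finset.sum_range_succ', Finset.sum_range_sub, sub_add_cancel]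
  refine ⟨β, (tendsto_add_atTop_iff_nat 1).1 (tendsto_of_tendsto_of_tendsto_of_le_of_le
    tendsto_const_nhds (ENNReal.tendsto_atTop_zero_of_tsum_ne_top hδ.ne_top)
    (fun _ => zero_le) fun n => ?_), ?_⟩
  · simpa only [hsum, pn_sub_comm u] using hα n
  · calc fnorm (pn μ (e (α 0)) - pn μ u) + ∑' k, fnorm (pn μ (e (α (k + 1) - α k)))
        ≤ δ 0 + ∑' k, (δ (k + 1) + δ k) := by
          gcongr with k
          · exact (fnorm_mono ((abs_pn_sub_pn_le _ _).trans (le_abs_self _))).trans (hα 0)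
          · exact hstep k
      _ = ∑' k, δ k + ∑' k, δ k := by
          rw [ENNReal.tsum_add, ← add_assoc, ← tsum_eq_zero_add' ENNReal.summable]
      _ < ε := (ENNReal.add_lt_add hδ hδ).trans_eq (ENNReal.add_halves ε)

lemma HasSumMod.pn_le {v : ι → M} {s : M} {G : L0 μ} (h : HasSumMod μ v s)
    (hG : ∀ F : Finset ι, ∑ i ∈ F, pn μ (v i) ≤ G) : pn μ s ≤ G := by
  obtain ⟨b, hb, hglb⟩ := h
  refine sub_nonpos.1 (hglb.2 (forall_mem_range.2 fun F => sub_le_iff_le_add.2 ?_))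
  have hbF : pn μ (s - ∑ i ∈ F, v i) ≤ b F :=
    (hb F).1 ⟨∅, Finset.disjoint_empty_left F, by rw [Finset.sum_empty, add_zero]⟩
  calc pn μ s ≤ pn μ (s - ∑ i ∈ F, v i) + pn μ (∑ i ∈ F, v i) := by
        simpa only [sub_add_cancel] using pn_add_le (s - ∑ i ∈ F, v i) (∑ i ∈ F, v i)
    _ ≤ b F + G := add_le_add hbF ((pn_sum_le F v).trans (hG F))

variable [Countable ι]

lemma meml1_of_forall_sum_le {v : ι → M} {G : L0 μ}
    (hG : ∀ F : Finset ι, ∑ i ∈ F, pn μ (v i) ≤ G) : Meml1 μ v := by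
  have hrange : l1PartialSums μ v = range fun F : Finset ι => ∑ i ∈ F, pn μ (v i) :=
    Set.ext fun _ => exists_congr fun _ => eq_comm
  rw [Meml1, hrange]
  exact exists_isLUB_of_countable (countable_range _) (range_nonempty _)
    ⟨G, forall_mem_range.2 hG⟩

lemma hasSumMod_of_isGLB {v : ι → M} {s : M} {a : ι → L0 μ} {G : L0 μ}
    (hva : ∀ i, pn μ (v i) ≤ a i) (hG : ∀ F : Finset ι, ∑ i ∈ F, a i ≤ G)
    (hglb : IsGLB (range fun F : Finset ι => pn μ (s - ∑ i ∈ F, v i) + (G - ∑ i ∈ F, a i)) 0) :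
    HasSumMod μ v s := by
  have hbound (F : Finset ι) :
      pn μ (s - ∑ i ∈ F, v i) + (G - ∑ i ∈ F, a i) ∈ upperBounds (sumUB μ v s F) := by
    rintro _ ⟨H, hHF, rfl⟩
    rw [← sub_sub]
    refine (pn_sub_le _ _).trans (add_le_add le_rfl (le_sub_iff_add_le.2 ?_))
    calc pn μ (∑ i ∈ H, v i) + ∑ i ∈ F, a i ≤ ∑ i ∈ H, a i + ∑ i ∈ F, a i := by
          gcongr
          exact (pn_sum_le H v).trans (Finset.sum_le_sum fun i _ => hva i)
      _ = ∑ i ∈ H.disjUnion F hHF, a i := (Finset.sum_disjUnion hHF).symm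
      _ ≤ G := hG _
  have hmem (F : Finset ι) : pn μ (s - ∑ i ∈ F, v i) ∈ sumUB μ v s F :=
    ⟨∅, Finset.disjoint_empty_left F, by rw [Finset.sum_empty, add_zero]⟩
  have hcount (F : Finset ι) : (sumUB μ v s F).Countable := by
    refine (countable_range fun H => pn μ (s - (∑ i ∈ F, v i + ∑ i ∈ H, v i))).mono ?_
    rintro _ ⟨H, -, rfl⟩
    exact mem_range_self H
  choose b hb using fun F => exists_isLUB_of_countable (hcount F) ⟨_, hmem F⟩ ⟨_, hbound F⟩
  refine ⟨b, hb, forall_mem_range.2 fun F => (pn_nonneg _).trans ((hb F).1 (hmem F)), ?_⟩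
  exact fun c hc => hglb.2 (forall_mem_range.2 fun F =>
    (hc (mem_range_self F)).trans ((hb F).2 (hbound F)))

end BanachMod

section Tensor

variable {μ : Measure X} [SFinite μ] {M N P : Type*}
  [AddCommGroup M] [Module (L0 μ) M] [BanachMod μ M]
  [AddCommGroup N] [Module (L0 μ) N] [BanachMod μ N]
  [AddCommGroup P] [Module (L0 μ) P] [BanachMod μ P]
  {e : M ⊗[L0 μ] N →ₗ[L0 μ] P}

lemma piReps_nonempty (α : M ⊗[L0 μ] N) : (piReps μ α).Nonempty := by
  obtain ⟨n, v, w, hα⟩ := TensorProduct.exists_sum_tmul_eq α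
  exact ⟨_, n, v, w, hα, rfl⟩

/-- Representations with values `f` and `g` are glued along the set where `f ≤ g`, whose indicator
is `χ`. -/
lemma infClosed_piReps (α : M ⊗[L0 μ] N) : InfClosed (piReps μ α) := by
  rintro f ⟨m, v, w, hα, hf⟩ g ⟨n, v', w', hα', hg⟩
  obtain ⟨χ, hχ0, hχ1, hχ⟩ := exists_inf_eq_mul_add_mul f g
  refine ⟨m + n, Fin.append (fun i => χ • v i) fun i => (1 - χ) • v' i, Fin.append w w', ?_, ?_⟩
  · simp only [Fin.sum_univ_add, Fin.append_left, Fin.append_right, ← smul_tmul',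
      ← Finset.smul_sum]
    rw [← hα, ← hα', ← add_smul, add_sub_cancel, one_smul]
  · simp only [Fin.sum_univ_add, Fin.append_left, Fin.append_right, pn_smul, abs_of_nonneg hχ0,
      abs_of_nonneg (sub_nonneg.2 hχ1), mul_assoc, ← Finset.mul_sum]
    rw [← hf, ← hg, hχ]

/-- The set of values `∑ₙ |vₙ||wₙ|` of the series representations `p = ∑ₙ e (vₙ ⊗ wₙ)` with
`(e (vₙ ⊗ wₙ))ₙ ∈ ℓ₁(ℕ, P)`; its infimum is the projective pointwise norm of `p` when `e` realizes
`P` as the projective tensor product. The sum of the nonnegative series `∑ₙ |vₙ||wₙ|` is encoded as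
the supremum of its finite partial sums. -/
def piSeriesValues (e : M ⊗[L0 μ] N →ₗ[L0 μ] P) (p : P) : Set (L0 μ) :=
  {g | ∃ (v : ℕ → M) (w : ℕ → N),
    Meml1 μ (fun n => e (v n ⊗ₜ[L0 μ] w n)) ∧
    HasSumMod μ (fun n => e (v n ⊗ₜ[L0 μ] w n)) p ∧
    IsLUB {h : L0 μ | ∃ F : Finset ℕ, h = ∑ n ∈ F, pn μ (v n) * pn μ (w n)} g}

lemma mem_piSeriesValues {ι : Type*} [Countable ι] [Infinite ι]
    (he : ∀ v w, pn μ (e (v ⊗ₜ[L0 μ] w)) ≤ pn μ v * pn μ w)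
    {p : P} {v : ι → M} {w : ι → N} {G : L0 μ}
    (hG : IsLUB (range fun F : Finset ι => ∑ i ∈ F, pn μ (v i) * pn μ (w i)) G)
    (hp : IsGLB (range fun F : Finset ι => pn μ (p - ∑ i ∈ F, e (v i ⊗ₜ[L0 μ] w i)) +
      (G - ∑ i ∈ F, pn μ (v i) * pn μ (w i))) 0) :
    G ∈ piSeriesValues e p := by
  obtain ⟨φ⟩ : Nonempty (ℕ ≃ ι) := nonempty_equiv_of_countable
  have hrange (Φ : Finset ι → L0 μ) :
      range (fun F : Finset ℕ => Φ (F.map φ.toEmbedding)) = range Φ :=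
    φ.finsetCongr.surjective.range_comp Φ
  rw [← hrange] at hG hp
  simp only [Finset.sum_map, Equiv.coe_toEmbedding] at hG hp
  have hle (F : Finset ℕ) : ∑ n ∈ F, pn μ (v (φ n)) * pn μ (w (φ n)) ≤ G :=
    hG.1 (mem_range_self F)
  refine ⟨v ∘ φ, w ∘ φ, meml1_of_forall_sum_le (G := G) fun F => ?_,
    hasSumMod_of_isGLB (fun n => he _ _) hle hp, ?_⟩
  · exact (Finset.sum_le_sum fun n _ => he _ _).trans (hle F)
  · convert hG using 1
    exact Set.ext fun _ => exists_congr fun _ => eq_comm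

lemma mem_piSeriesValues_of_blocks {κ : ℕ → Type*} [∀ k, Fintype (κ k)] [∀ k, Nonempty (κ k)]
    (he : ∀ v w, pn μ (e (v ⊗ₜ[L0 μ] w)) ≤ pn μ v * pn μ w) {p : P}
    {v : (Σ k, κ k) → M} {w : (Σ k, κ k) → N} {G : L0 μ}
    (hG : HasSumAE (fun k => ∑ j, pn μ (v ⟨k, j⟩) * pn μ (w ⟨k, j⟩)) G)
    (hsum : ∑' k, fnorm (∑ j, pn μ (v ⟨k, j⟩) * pn μ (w ⟨k, j⟩)) ≠ ∞)
    (hp : Tendsto (fun n => fnorm (pn μ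
      (p - ∑ k ∈ Finset.range n, ∑ j, e (v ⟨k, j⟩ ⊗ₜ[L0 μ] w ⟨k, j⟩)))) atTop (𝓝 0)) :
    G ∈ piSeriesValues e p := by
  have : ∀ k, Countable (κ k) := fun k => Finite.to_countable
  have : Infinite (Σ k, κ k) := .of_surjective Sigma.fst Sigma.fst_surjective
  have hnonneg (s : Σ k, κ k) : 0 ≤ pn μ (v s) * pn μ (w s) :=
    mul_nonneg (pn_nonneg _) (pn_nonneg _)
  have hlub : IsLUB (range fun F : Finset (Σ k, κ k) => ∑ s ∈ F, pn μ (v s) * pn μ (w s)) G :=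
    (hG.sigma (f := fun s => pn μ (v s) * pn μ (w s)) hnonneg).isLUB hnonneg
  refine mem_piSeriesValues he hlub (isGLB_of_forall_exists_fnorm_sub_le ?_ fun ε hε => ?_)
  · exact forall_mem_range.2 fun F =>
      add_nonneg (pn_nonneg _) (sub_nonneg.2 (hlub.1 (mem_range_self F)))
  have hlim := hp.add (ENNReal.tendsto_sum_nat_add _ hsum)
  rw [add_zero] at hlim
  obtain ⟨n, hn⟩ := (hlim.eventually_lt_const hε).exists
  refine ⟨_, mem_range_self ((Finset.range n).sigma fun _ => Finset.univ), ?_⟩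
  rw [sub_zero, Finset.sum_sigma, Finset.sum_sigma]
  exact (fnorm_add_le _ _).trans ((add_le_add le_rfl (hG.sub_sum_range n).fnorm_le).trans hn.le)

lemma pn_mem_lowerBounds_piSeriesValues
    (he : ∀ v w, pn μ (e (v ⊗ₜ[L0 μ] w)) ≤ pn μ v * pn μ w) (p : P) :
    pn μ p ∈ lowerBounds (piSeriesValues e p) := by
  rintro G ⟨v, w, -, hsum, hlub⟩
  refine hsum.pn_le fun F => ?_
  exact (Finset.sum_le_sum fun n _ => he _ _).trans (hlub.1 ⟨F, rfl⟩)

namespace IsPiTensor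

lemma pn_tmul_le (hP : IsPiTensor μ M N P e) (v : M) (w : N) :
    pn μ (e (v ⊗ₜ[L0 μ] w)) ≤ pn μ v * pn μ w :=
  (hP.pn_emb _).1 ⟨1, fun _ => v, fun _ => w, by rw [Fin.sum_univ_one], by rw [Fin.sum_univ_one]⟩

lemma exists_fnorm_pn_sub_le (hP : IsPiTensor μ M N P e) (p : P) {ε : ℝ≥0∞} (hε : 0 < ε) :
    ∃ α : M ⊗[L0 μ] N, fnorm (pn μ (e α - p)) ≤ ε := by
  obtain ⟨r, -, hr0, hrε⟩ := ENNReal.lt_iff_exists_real_btwn.1 hε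
  obtain ⟨α, hα⟩ := hP.dense p r (ENNReal.ofReal_pos.1 hr0)
  rw [dM] at hα
  exact ⟨α, (fnorm_eq_ofReal_dL0 _).trans_le ((ENNReal.ofReal_le_ofReal hα.le).trans hrε.le)⟩

/-- The index set `Fin (n + 1)` is nonempty, so that the concatenation of infinitely many such
representations is an infinite family. -/
lemma exists_rep_fnorm_sub_le (hP : IsPiTensor μ M N P e) (α : M ⊗[L0 μ] N) {ε : ℝ≥0∞}
    (hε : 0 < ε) :
    ∃ (n : ℕ) (v : Fin (n + 1) → M) (w : Fin (n + 1) → N), α = ∑ i, v i ⊗ₜ[L0 μ] w i ∧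
      fnorm ((∑ i, pn μ (v i) * pn μ (w i)) - pn μ (e α)) ≤ ε := by
  obtain ⟨_, ⟨n, v, w, hα, rfl⟩, hε'⟩ :=
    exists_fnorm_sub_le_of_isGLB (infClosed_piReps α) (piReps_nonempty α) (hP.pn_emb α) hε
  refine ⟨n, Fin.cons 0 v, Fin.cons 0 w, ?_, ?_⟩
  · simpa only [Fin.sum_univ_succ, Fin.cons_zero, Fin.cons_succ, zero_tmul, zero_add] using hα
  · simpa only [Fin.sum_univ_succ, Fin.cons_zero, Fin.cons_succ, pn_zero, zero_mul, zero_add]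
      using hε'

lemma exists_mem_piSeriesValues_fnorm_sub_le (hP : IsPiTensor μ M N P e) (p : P) {ε : ℝ≥0∞}
    (hε : 0 < ε) : ∃ G ∈ piSeriesValues e p, fnorm (G - pn μ p) ≤ ε := by
  have hε2 : 0 < ε / 2 := ENNReal.half_pos hε.ne'
  obtain ⟨β, hβp, hβ⟩ :=
    exists_telescoping_approx e (fun q _ => hP.exists_fnorm_pn_sub_le q) p hε2
  obtain ⟨δ, hδ0, hδ⟩ := ENNReal.exists_pos_sum_of_countable' hε2.ne' ℕ
  choose n v w hrep hg using fun k => hP.exists_rep_fnorm_sub_le (β k) (hδ0 k)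
  let g (k : ℕ) : L0 μ := ∑ i, pn μ (v k i) * pn μ (w k i)
  have hbound : fnorm (g 0 - pn μ p) + ∑' k, fnorm (g (k + 1)) < ε :=
    (fnorm_sub_add_tsum_le (fun k => pn μ (e (β k))) g (pn μ p)).trans_lt <|
      (ENNReal.add_lt_add ((ENNReal.tsum_le_tsum hg).trans_lt hδ) hβ).trans_eq
        (ENNReal.add_halves ε)
  have hsum : ∑' k, fnorm (g k) ≠ ∞ :=
    tsum_fnorm_ne_top_of_succ (le_add_self.trans_lt hbound).ne_top
  obtain ⟨G, hG⟩ := exists_hasSumAE_of_tsum_fnorm_ne_top hsum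
  refine ⟨G, ?_, (hG.fnorm_sub_le _).trans hbound.le⟩
  refine mem_piSeriesValues_of_blocks (κ := fun k => Fin (n k + 1)) (v := fun s => v s.1 s.2)
    (w := fun s => w s.1 s.2) hP.pn_tmul_le hG hsum ?_
  simpa only [hrep, map_sum] using hβp

end IsPiTensor

theorem projective_norm_series_representation_general (hP : IsPiTensor μ M N P e) (p : P) :
    IsGLB (piSeriesValues e p) (pn μ p) :=
  isGLB_of_forall_exists_fnorm_sub_le (pn_mem_lowerBounds_piSeriesValues hP.pn_tmul_le p)
    fun _ hε => hP.exists_mem_piSeriesValues_fnorm_sub_le p hε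

end Tensor

/-- series characterisation of the projective pointwise norm on the
completion. For every `α ∈ ℳ ⊗̂_π 𝒩`,
`|α|_π = ⋀ { ∑_{n∈ℕ} |v_n||w_n| : (v_n ⊗ w_n)_n ∈ ℓ₁(ℕ, ℳ ⊗̂_π 𝒩), α = ∑_n v_n ⊗ w_n }`,
where `∑_{n∈ℕ} v_n ⊗ w_n` is the sum of the summable family in `ℳ ⊗̂_π 𝒩` and
`∑_{n∈ℕ} |v_n||w_n| = ⋁_F ∑_{n ∈ F} |v_n||w_n|`. Here `P` realizes `ℳ ⊗̂_π 𝒩`. -/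
theorem projective_norm_series_representation
    (μ : Measure X) [SigmaFinite μ]
    (M : Type*) [AddCommGroup M] [Module (L0 μ) M] [BanachMod μ M]
    (N : Type*) [AddCommGroup N] [Module (L0 μ) N] [BanachMod μ N]
    (P : Type*) [AddCommGroup P] [Module (L0 μ) P] [BanachMod μ P]
    (e : M ⊗[L0 μ] N →ₗ[L0 μ] P) (hP : IsPiTensor μ M N P e) (p : P) :
    IsGLB {g : L0 μ | ∃ (v : ℕ → M) (w : ℕ → N),
      Meml1 μ (fun n => e (v n ⊗ₜ[L0 μ] w n)) ∧
      HasSumMod μ (fun n => e (v n ⊗ₜ[L0 μ] w n)) p ∧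
      IsLUB {h : L0 μ | ∃ F : Finset ℕ, h = ∑ n ∈ F, pn μ (v n) * pn μ (w n)} g}
      (pn μ p) :=
  projective_norm_series_representation_general hP p

end Paper
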